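/- arXiv:1709.03268 — 2 statements merged into one kernel-verified Lean document; each statement's English description precedes it below -/
import Mathlib

section
/- If the ideals a and b are linked by I over M (that is, I ⊆ a ∩ b is generated by an M-regular sequence, aM ≠ M ≠ bM, bM = IM :_M a, aM = IM :_M b), then grade(a, M) = grade(b, M) = grade(I, M). -/
open RingTheory.Sequence

/-- The colon submodule `N :_M a = {m ∈ M | a m ⊆ N}`. -/
def Submodule.colonBy {R M : Type*} [CommRing R] [AddCommGroup M] [Module R M]
    (N : Submodule R M) (a : Ideal R) : Submodule R M :=
  ⨅ r ∈ a, N.comap (LinearMap.lsmul R M r)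
/-- `a` and `b` are linked by `I` over `M`: `I ⊆ a ∩ b` is generated by an `M`-regular
sequence, `aM ≠ M ≠ bM`, `IM :_M a = bM` and `IM :_M b = aM`. -/
def Ideal.LinkedBy (R M : Type*) [CommRing R] [AddCommGroup M] [Module R M]
    (a b I : Ideal R) : Prop :=
  I ≤ a ⊓ b ∧
  (∃ rs : List R, I = Ideal.ofList rs ∧ RingTheory.Sequence.IsRegular M rs) ∧
  a • (⊤ : Submodule R M) ≠ ⊤ ∧ b • (⊤ : Submodule R M) ≠ ⊤ ∧
  (I • ⊤ : Submodule R M).colonBy a = b • (⊤ : Submodule R M) ∧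
  (I • ⊤ : Submodule R M).colonBy b = a • (⊤ : Submodule R M)
/-- The `M`-grade of an ideal `c`: the length of a maximal `M`-regular sequence
with entries in `c`. -/
noncomputable def Module.grade (R : Type*) [CommRing R] (c : Ideal R)
    (M : Type*) [AddCommGroup M] [Module R M] : ℕ :=
  sSup {n | ∃ rs : List R, rs.length = n ∧ (∀ r ∈ rs, r ∈ c) ∧
    RingTheory.Sequence.IsRegular M rs}

namespace RingTheory.Sequence

open CategoryTheory Abelian

universe u v w

section Ext

variable {R : Type u} [CommRing R] [Small.{w} R]

/-- Scalars annihilating `N` annihilate `Ext N M n`. -/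
lemma ext_smul_eq_zero {N M : ModuleCat.{w} R} {n : ℕ} {r : R}
    (hr : r ∈ Module.annihilator R N) (x : Ext N M n) : r • x = 0 := by
  have h : r • 𝟙 N = 0 := by
    ext m
    exact Module.mem_annihilator.mp hr m
  rw [← Ext.mk₀_id_comp x, ← Ext.smul_comp, ← Ext.mk₀_smul, h, Ext.mk₀_zero, Ext.zero_comp]

/-- `Ext N M i` vanishes for `i < n` if the annihilator of `N` contains a weakly `M`-regular
sequence of length `n`. -/
lemma subsingleton_ext_of_isWeaklyRegular (N : ModuleCat.{w} R) {M : Type w} [AddCommGroup M]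
    [Module R M] {rs : List R} (reg : IsWeaklyRegular M rs)
    (hrs : ∀ r ∈ rs, r ∈ Module.annihilator R N) {i : ℕ} (hi : i < rs.length) :
    Subsingleton (Ext N (ModuleCat.of R M) i) := by
  induction rs generalizing M i with
  | nil => simp at hi
  | cons r rs ih =>
    rw [isWeaklyRegular_cons_iff] at reg
    simp only [List.mem_cons, forall_eq_or_imp] at hrs
    have hS := IsSMulRegular.smulShortComplex_shortExact (M := ModuleCat.of R M) reg.1
    refine subsingleton_of_forall_eq 0 fun x ↦ ?_
    have hx : x.comp (Ext.mk₀ (ModuleCat.smulShortComplex (ModuleCat.of R M) r).f)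
        (add_zero i) = 0 := by
      rw [ModuleCat.smulShortComplex_f_eq_smul_id]
      exact (Ext.smul_eq_comp_mk₀ x r).symm.trans (ext_smul_eq_zero hrs.1 x)
    cases i with
    | zero =>
      have := hS.mono_f
      exact Ext.postcomp_mk₀_injective_of_mono N
        (ModuleCat.smulShortComplex (ModuleCat.of R M) r).f (hx.trans (map_zero _).symm)
    | succ i =>
      obtain ⟨y, rfl⟩ := Ext.covariant_sequence_exact₁ N hS x hx rfl
      have := ih reg.2 hrs.2 (Nat.lt_of_succ_lt_succ hi)
      have hy : y = 0 := this.elim _ _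
      rw [hy]
      exact Ext.zero_comp ..

/-- A nonzero map `N → M / (rs) M` yields a nonzero class in `Ext N M rs.length` if `rs` is a
weakly `M`-regular sequence annihilating `N`. -/
lemma nontrivial_ext_of_isWeaklyRegular (N : ModuleCat.{w} R) {M : Type w} [AddCommGroup M]
    [Module R M] {rs : List R} (reg : IsWeaklyRegular M rs)
    (hrs : ∀ r ∈ rs, r ∈ Module.annihilator R N)
    {f : N →ₗ[R] M ⧸ (Ideal.ofList rs • ⊤ : Submodule R M)} (hf : f ≠ 0) :
    Nontrivial (Ext N (ModuleCat.of R M) rs.length) := by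
  induction rs generalizing M with
  | nil =>
    let e : (M ⧸ (Ideal.ofList ([] : List R) • ⊤ : Submodule R M)) ≃ₗ[R] M :=
      Submodule.quotEquivOfEqBot _ (by simp)
    have : Nontrivial (N ⟶ ModuleCat.of R M) := by
      refine ⟨ModuleCat.ofHom (e.toLinearMap ∘ₗ f), 0, fun h ↦ hf ?_⟩
      ext m
      have := LinearMap.congr_fun (congrArg ModuleCat.Hom.hom h) m
      exact e.injective (this.trans (map_zero e).symm)
    exact Ext.homEquiv₀.nontrivial
  | cons r rs ih =>
    have hvanish := subsingleton_ext_of_isWeaklyRegular N reg hrs (i := rs.length) (by simp)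
    rw [isWeaklyRegular_cons_iff] at reg
    simp only [List.mem_cons, forall_eq_or_imp] at hrs
    have hS := IsSMulRegular.smulShortComplex_shortExact (M := ModuleCat.of R M) reg.1
    let e := Submodule.quotOfListConsSMulTopEquivQuotSMulTopInner M r rs
    have := ih (f := e.toLinearMap ∘ₗ f) reg.2 hrs.2 fun h ↦ hf <| by
      ext m
      exact e.injective ((LinearMap.congr_fun h m).trans (map_zero e).symm)
    obtain ⟨y, hy⟩ := exists_ne (0 : Ext N (ModuleCat.of R (QuotSMulTop r M)) rs.length)
    refine ⟨Ext.comp y hS.extClass rfl, 0, fun h ↦ hy ?_⟩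
    obtain ⟨x, rfl⟩ := Ext.covariant_sequence_exact₃ N hS y rfl h
    have hx : x = 0 := hvanish.elim _ _
    rw [hx]
    exact Ext.zero_comp ..

end Ext

/-- If `xs` is a weakly `M`-regular sequence in `a` and `a` annihilates a nonzero element of
`M / (xs) M`, then no weakly `M`-regular sequence in `a` is longer than `xs`. -/
lemma IsWeaklyRegular.length_le_of_smul_mem {R : Type u} {M : Type v} [CommRing R]
    [AddCommGroup M] [Module R M] {a : Ideal R} {xs ys : List R} (hx : IsWeaklyRegular M xs)
    (hxa : ∀ r ∈ xs, r ∈ a) (hy : IsWeaklyRegular M ys) (hya : ∀ r ∈ ys, r ∈ a) {m : M}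
    (hm : m ∉ (Ideal.ofList xs • ⊤ : Submodule R M))
    (ham : ∀ r ∈ a, r • m ∈ (Ideal.ofList xs • ⊤ : Submodule R M)) :
    ys.length ≤ xs.length := by
  by_contra! hlt
  let M' := ULift.{max u v} M
  let e : M ≃ₗ[R] M' := ULift.moduleEquiv.symm
  let Q := M' ⧸ (Ideal.ofList xs • ⊤ : Submodule R M')
  have hmem (n : M) : (Submodule.Quotient.mk (e n) : Q) = 0 ↔
      n ∈ (Ideal.ofList xs • ⊤ : Submodule R M) := by
    rw [Submodule.Quotient.mk_eq_zero, ← LinearEquiv.range e, LinearMap.range_eq_map,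
      ← Submodule.map_smul'']
    exact (Submodule.mem_map_equiv (e := e) _).trans (by simp)
  let q : Q := Submodule.Quotient.mk (e m)
  let N := ModuleCat.of R (Submodule.span R {q})
  have hN : a ≤ Module.annihilator R N := fun r hr ↦ by
    have hq : r • q = 0 := (hmem (r • m)).mpr (ham r hr)
    exact (Submodule.mem_annihilator_span_singleton q r).mpr hq
  have hf : (Submodule.span R {q}).subtype ≠ 0 := fun h ↦
    hm <| (hmem m).mp <| LinearMap.congr_fun h ⟨q, Submodule.mem_span_singleton_self q⟩
  have h₁ := nontrivial_ext_of_isWeaklyRegular N ((e.isWeaklyRegular_congr xs).mp hx)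
    (fun r hr ↦ hN (hxa r hr)) hf
  have h₂ := subsingleton_ext_of_isWeaklyRegular N ((e.isWeaklyRegular_congr ys).mp hy)
    (fun r hr ↦ hN (hya r hr)) hlt
  exact not_subsingleton _ h₂

end RingTheory.Sequence

lemma Submodule.mem_colonBy {R M : Type*} [CommRing R] [AddCommGroup M] [Module R M]
    {N : Submodule R M} {a : Ideal R} {m : M} : m ∈ N.colonBy a ↔ ∀ r ∈ a, r • m ∈ N := by
  simp [Submodule.colonBy]

namespace Ideal.LinkedBy

variable {R M : Type*} [CommRing R] [AddCommGroup M] [Module R M] {a b I : Ideal R}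

lemma symm (h : LinkedBy R M a b I) : LinkedBy R M b a I :=
  ⟨inf_comm a b ▸ h.1, h.2.1, h.2.2.2.1, h.2.2.1, h.2.2.2.2.2, h.2.2.2.2.1⟩

/-- The ideal `a` annihilates a nonzero element of `M / I M`. -/
lemma exists_smul_mem (h : LinkedBy R M a b I) :
    ∃ m ∉ (I • ⊤ : Submodule R M), ∀ r ∈ a, r • m ∈ (I • ⊤ : Submodule R M) := by
  obtain ⟨-, -, ha, -, hb, hab⟩ := h
  by_contra! hI
  refine ha (hab ▸ eq_top_iff.mpr fun m _ ↦ Submodule.mem_colonBy.mpr fun r hr ↦ ?_)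
  have hrm : r • m ∈ (I • ⊤ : Submodule R M).colonBy a :=
    hb ▸ Submodule.smul_mem_smul hr trivial
  by_contra hn
  obtain ⟨s, hs, hsn⟩ := hI _ hn
  exact hsn (Submodule.mem_colonBy.mp hrm s hs)

/-- The grade of any ideal between `I` and `a` is the length of a regular sequence
generating `I`. -/
lemma grade_eq_length (h : LinkedBy R M a b I) {rs : List R} (hrs : I = ofList rs)
    (reg : IsRegular M rs) {c : Ideal R} (hIc : I ≤ c) (hca : c ≤ a) :
    Module.grade R c M = rs.length := by
  have hmem : ∀ r ∈ rs, r ∈ I := fun r hr ↦ hrs ▸ subset_span hr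
  obtain ⟨m, hm, ham⟩ := h.exists_smul_mem
  refine IsGreatest.csSup_eq ⟨⟨rs, rfl, fun r hr ↦ hIc (hmem r hr), reg⟩, ?_⟩
  rintro _ ⟨ys, rfl, hys, hreg⟩
  subst hrs
  exact reg.toIsWeaklyRegular.length_le_of_smul_mem (fun r hr ↦ hca (hIc (hmem r hr)))
    hreg.toIsWeaklyRegular (fun r hr ↦ hca (hys r hr)) hm ham

end Ideal.LinkedBy

/-- If `a` and `b` are linked by `I` over `M` then
`grade(a, M) = grade(b, M) = grade(I, M)`. -/
theorem grade_eq_of_linked {R M : Type*} [CommRing R] [IsNoetherianRing R]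
    [AddCommGroup M] [Module R M] [Module.Finite R M]
    (a b I : Ideal R) (h : Ideal.LinkedBy R M a b I) :
    Module.grade R a M = Module.grade R b M ∧ Module.grade R b M = Module.grade R I M := by
  obtain ⟨rs, hrs, reg⟩ := h.2.1
  have hIa : I ≤ a := h.1.trans inf_le_left
  have hIb : I ≤ b := h.1.trans inf_le_right
  rw [h.grade_eq_length hrs reg hIa le_rfl, h.symm.grade_eq_length hrs reg hIb le_rfl,
    h.grade_eq_length hrs reg le_rfl hIa]
  exact ⟨rfl, rfl⟩
end

section
/- If a and b are linked by I over M, then every minimal member of Ass(M/IM) lies in the union of the minimal members of Ass(M/aM) and the minimal members of Ass(M/bM). -/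
open RingTheory.Sequence

/-- The set of minimal members of the associated primes of `M`. -/
def minAss (R M : Type*) [CommRing R] [AddCommGroup M] [Module R M] : Set (Ideal R) :=
  {p ∈ associatedPrimes R M | ∀ q ∈ associatedPrimes R M, q ≤ p → q = p}

namespace Submodule

variable {R M : Type*} [CommRing R] [AddCommGroup M] [Module R M]

theorem mem_colonBy_s8 {N : Submodule R M} {a : Ideal R} {m : M} :
    m ∈ N.colonBy a ↔ ∀ r ∈ a, r • m ∈ N := by
  simp [colonBy]

/-- The quotient by a colon submodule `N :_M a` embeds in a finite power of `M ⧸ N`, hence has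
no new associated primes. -/
theorem associatedPrimes_quotient_colonBy_subset [IsNoetherianRing R]
    (N : Submodule R M) (a : Ideal R) :
    associatedPrimes R (M ⧸ N.colonBy a) ⊆ associatedPrimes R (M ⧸ N) := by
  intro p hp
  obtain ⟨hprime, y, hy⟩ := isAssociatedPrime_iff.mp hp
  obtain ⟨x, rfl⟩ := Submodule.Quotient.mk_surjective _ y
  let L : Submodule R (M ⧸ N) := a • span R {Submodule.Quotient.mk x}
  have hann : Module.annihilator R L = p := by
    ext r
    rw [hy, Submodule.mem_colon_singleton, ← Submodule.Quotient.mk_smul, Submodule.mem_bot,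
      Submodule.Quotient.mk_eq_zero, mem_colonBy_s8, Submodule.mem_annihilator]
    simp only [L, Submodule.mem_smul_span_singleton]
    constructor
    · intro h s hs
      have := h _ ⟨s, hs, rfl⟩
      rwa [← Submodule.Quotient.mk_smul, ← Submodule.Quotient.mk_smul,
        Submodule.Quotient.mk_eq_zero, smul_comm] at this
    · rintro h _ ⟨s, hs, rfl⟩
      rw [← Submodule.Quotient.mk_smul, ← Submodule.Quotient.mk_smul,
        Submodule.Quotient.mk_eq_zero, smul_comm]
      exact h s hs
  have : Module.Finite R L := Module.Finite.iff_fg.mpr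
    (Submodule.FG.smul (IsNoetherian.noetherian a) (fg_span_singleton _))
  refine associatedPrimes.subset_of_injective L.injective_subtype
    (Module.associatedPrimes.minimalPrimes_annihilator_subset_associatedPrimes R L ?_)
  rw [hann, Ideal.minimalPrimes_eq_subsingleton_self]
  rfl

end Submodule

theorem mem_minAss_of_annihilator_le {R M M' : Type*} [CommRing R] [IsNoetherianRing R]
    [AddCommGroup M] [Module R M] [AddCommGroup M'] [Module R M'] [Module.Finite R M']
    (hsub : associatedPrimes R M' ⊆ associatedPrimes R M) {p : Ideal R} (hp : p ∈ minAss R M)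
    (hle : Module.annihilator R M' ≤ p) : p ∈ minAss R M' := by
  have := hp.1.isPrime
  obtain ⟨q, hq, hqp⟩ := Ideal.exists_minimalPrimes_le hle
  have hq' := Module.associatedPrimes.minimalPrimes_annihilator_subset_associatedPrimes R M' hq
  obtain rfl := hp.2 q (hsub hq') hqp
  exact ⟨hq', fun r hr => hp.2 r (hsub hr)⟩

/-- If `a` and `b` are linked by `I` over `M`, then every minimal associated prime of
`M/IM` is a minimal associated prime of `M/aM` or of `M/bM`. -/
theorem minAss_subset_of_linked {R M : Type*} [CommRing R] [IsNoetherianRing R]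
    [AddCommGroup M] [Module R M] [Module.Finite R M]
    (a b I : Ideal R) (h : Ideal.LinkedBy R M a b I) :
    minAss R (M ⧸ (I • ⊤ : Submodule R M)) ⊆
      minAss R (M ⧸ (a • ⊤ : Submodule R M)) ∪ minAss R (M ⧸ (b • ⊤ : Submodule R M)) := by
  obtain ⟨-, -, -, -, hb, ha⟩ := h
  intro p hp
  have hsubA := Submodule.associatedPrimes_quotient_colonBy_subset (I • ⊤ : Submodule R M) b
  have hsubB := Submodule.associatedPrimes_quotient_colonBy_subset (I • ⊤ : Submodule R M) a
  rw [ha] at hsubA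
  rw [hb] at hsubB
  have hmul : Module.annihilator R (M ⧸ (a • ⊤ : Submodule R M)) *
      Module.annihilator R (M ⧸ (b • ⊤ : Submodule R M)) ≤ p := by
    refine le_trans ?_ (Submodule.annihilator_top.ge.trans hp.1.annihilator_le)
    refine Ideal.mul_le.mpr fun r hr s hs => ?_
    rw [Submodule.annihilator_quotient, Submodule.mem_colon] at hr hs ⊢
    intro m hm
    rw [mul_comm, mul_smul]
    refine Submodule.smul_induction_on (p := fun x => s • x ∈ (I • ⊤ : Submodule R M))
      (hr m hm) (fun t ht n _ => ?_) fun x y hx hy => ?_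
    · rw [smul_comm]
      exact Submodule.mem_colonBy_s8.mp (hb.ge (hs n trivial)) t ht
    · rw [smul_add]
      exact add_mem hx hy
  rcases hp.1.isPrime.mul_le.mp hmul with hle | hle
  · exact Or.inl (mem_minAss_of_annihilator_le hsubA hp hle)
  · exact Or.inr (mem_minAss_of_annihilator_le hsubB hp hle)
end
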